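/- arXiv:1608.02406 — 3 statements merged into one kernel-verified Lean document; each statement's English description precedes it below -/
import Mathlib

section
/- In the manipulation construction, every rational ballot J satisfies at least one of the following four conditions: (1) for some i ∈ [3], J sets every issue u_{i,ℓ} (ℓ ∈ [u]) to true; (2) J sets exactly one of x_i and x'_i to true for each i ∈ [n], sets every z_i to false, sets exactly one of y_j and y'_j to true for each j ∈ [m], sets every t_j to false, sets either all w_{2,ℓ} (ℓ ∈ [n]) to true or all w_{3,ℓ} (ℓ ∈ [n]) to true, and falsifies ψ; (3) J sets exactly one of x_i and x'_i to true for each i, sets every z_i to false, sets every t_j to true, sets, for each j, either neither or both of y_j and y'_j to true, and sets every w_{1,ℓ} (ℓ ∈ [n+1]) to true; (4) J sets every z_i to true, sets, for each i, either neither or both of x_i and x'_i to true, sets every t_j to true, sets, for each j, either neither or both of y_j and y'_j to true, and sets either all w_{2,ℓ} to true or all w_{3,ℓ} to true. -/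
/-!
A rational ballot either has an all-true `u`-row, which is case (1), or satisfies `Γ₀`, and then
`A` or `Z` holds. Under `A` all `z`-issues are false; since `n / 3 > 0`, this refutes `Z`, and the
exclusive disjunction of `B` and `T` separates cases (2) and (3). Under `Z` also `T` holds, which
gives case (4). In (3) and (4) the conjuncts `T → …` and `Z → …` of `Γ₀` make both issues of the
respective pairs false, hence equal.
-/

/-!
Constraint-based judgment aggregation: the manipulation construction.
Issues are modelled as an inductive type, ballots as functions `Issue n m → Bool`,
the integrity constraint as a predicate on ballots, and the formula ψ as a Boolean
function of the assignments to X and Y.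
-/

namespace Manip

/-- The issues of the manipulation construction. -/
inductive Issue (n m : ℕ) : Type
  | x : Fin n → Issue n m
  | x' : Fin n → Issue n m
  | z : Fin (n / 3) → Issue n m
  | y : Fin m → Issue n m
  | y' : Fin m → Issue n m
  | t : Fin m → Issue n m
  | w1 : Fin (n + 1) → Issue n m
  | w2 : Fin n → Issue n m
  | w3 : Fin n → Issue n m
  | u : Fin 3 → Fin (10 * n + 10 * m + 10) → Issue n m
  deriving DecidableEq, Fintype

variable {n m : ℕ}

/-- Hamming distance between two ballots: the number of issues on which they differ. -/
def hamming {I : Type*} [Fintype I] (r r' : I → Bool) : ℕ :=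
  (Finset.univ.filter (fun i => r i ≠ r' i)).card

def bigA (r : Issue n m → Bool) : Prop := ∀ i, r (.x i) ≠ r (.x' i)
def bigZ (r : Issue n m → Bool) : Prop := ∀ i, r (.z i) = true
def bigB (r : Issue n m → Bool) : Prop := ∀ j, r (.y j) ≠ r (.y' j)
def bigT (r : Issue n m → Bool) : Prop := ∀ j, r (.t j) = true
def bigW1 (r : Issue n m → Bool) : Prop := ∀ ℓ, r (.w1 ℓ) = true
def bigW2 (r : Issue n m → Bool) : Prop := ∀ ℓ, r (.w2 ℓ) = true
def bigW3 (r : Issue n m → Bool) : Prop := ∀ ℓ, r (.w3 ℓ) = true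

/-- The part Γ₀ of the integrity constraint. -/
def gamma0 (psi : (Fin n → Bool) → (Fin m → Bool) → Bool) (r : Issue n m → Bool) : Prop :=
  (bigA r ∨ bigZ r) ∧ (bigA r → ∀ i, r (.z i) = false) ∧
  Xor' (bigB r) (bigT r) ∧ (bigB r → ∀ j, r (.t j) = false) ∧
  (bigZ r → ∀ i, r (.x i) = false ∧ r (.x' i) = false) ∧
  (bigT r → ∀ j, r (.y j) = false ∧ r (.y' j) = false) ∧
  (bigZ r → bigT r) ∧
  ((bigZ r ∧ bigT r) → (bigW2 r ∨ bigW3 r)) ∧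
  ((¬ bigZ r ∧ bigT r) → bigW1 r) ∧
  ((¬ bigZ r ∧ ¬ bigT r) →
    (psi (fun i => r (.x i)) (fun j => r (.y j)) = false ∧ (bigW2 r ∨ bigW3 r)))

/-- A ballot is rational if it satisfies the integrity constraint
`Γ = Γ₀ ∨ ⋁_{i∈[3]} ⋀_{ℓ∈[u]} u_{i,ℓ}`. -/
def rational (psi : (Fin n → Bool) → (Fin m → Bool) → Bool) (r : Issue n m → Bool) : Prop :=
  gamma0 psi r ∨ ∃ i : Fin 3, ∀ ℓ, r (.u i ℓ) = true

/-- The first individual ballot J₁: true exactly on the w₁- and u₁-issues. -/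
def Jone : Issue n m → Bool := fun i => match i with
  | .w1 _ => true
  | .u k _ => k == 0
  | _ => false

/-- The second individual ballot J₂: true exactly on the w₂- and u₂-issues. -/
def Jtwo : Issue n m → Bool := fun i => match i with
  | .w2 _ => true
  | .u k _ => k == 1
  | _ => false

/-- The third individual ballot J₃: true exactly on the x-, x'-, w₃- and u₃-issues. -/
def Jthree : Issue n m → Bool := fun i => match i with
  | .x _ => true
  | .x' _ => true
  | .w3 _ => true
  | .u k _ => k == 2
  | _ => false

/-- Cumulative Hamming distance of a ballot to a profile of three ballots. -/
def dist3 (r p1 p2 p3 : Issue n m → Bool) : ℕ :=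
  hamming r p1 + hamming r p2 + hamming r p3

/-- Cumulative Hamming distance to the profile J⃗ = (J₁, J₂, J₃). -/
def DistP (r : Issue n m → Bool) : ℕ := dist3 r Jone Jtwo Jthree

/-- Membership in the set of Kemeny outcomes of the profile (p1, p2, p3):
a rational ballot minimizing the cumulative Hamming distance among rational ballots. -/
def kemenyMem (psi : (Fin n → Bool) → (Fin m → Bool) → Bool)
    (p1 p2 p3 r : Issue n m → Bool) : Prop :=
  rational psi r ∧ ∀ r', rational psi r' → dist3 r p1 p2 p3 ≤ dist3 r' p1 p2 p3


end Manip

open Manip in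
/-- In the manipulation construction, every rational ballot satisfies
at least one of the four conditions (1)–(4). -/
theorem manip_rational_ballot_cases (n m : ℕ) (hn : 0 < n) (hdvd : 3 ∣ n) (hm : 0 < m)
    (psi : (Fin n → Bool) → (Fin m → Bool) → Bool)
    (J : Issue n m → Bool) (hJ : rational psi J) :
    -- (1) some u-row is entirely true
    (∃ i : Fin 3, ∀ ℓ, J (.u i ℓ) = true) ∨
    -- (2)
    ((∀ i, J (.x i) ≠ J (.x' i)) ∧ (∀ i, J (.z i) = false) ∧
      (∀ j, J (.y j) ≠ J (.y' j)) ∧ (∀ j, J (.t j) = false) ∧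
      ((∀ ℓ, J (.w2 ℓ) = true) ∨ (∀ ℓ, J (.w3 ℓ) = true)) ∧
      psi (fun i => J (.x i)) (fun j => J (.y j)) = false) ∨
    -- (3)
    ((∀ i, J (.x i) ≠ J (.x' i)) ∧ (∀ i, J (.z i) = false) ∧
      (∀ j, J (.t j) = true) ∧ (∀ j, J (.y j) = J (.y' j)) ∧
      (∀ ℓ, J (.w1 ℓ) = true)) ∨
    -- (4)
    ((∀ i, J (.z i) = true) ∧ (∀ i, J (.x i) = J (.x' i)) ∧
      (∀ j, J (.t j) = true) ∧ (∀ j, J (.y j) = J (.y' j)) ∧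
      ((∀ ℓ, J (.w2 ℓ) = true) ∨ (∀ ℓ, J (.w3 ℓ) = true))) := by
  rcases hJ with ⟨hAZ, hAz, hBT, hBt, hZx, hTy, hZT, hZTw, hTw, hw⟩ | hu
  · rcases hAZ with hA | hZ
    · -- `n` is a positive multiple of 3, so there is a `z`-issue, and `A` makes it false.
      have hnZ : ¬ bigZ J := fun hZ => by
        have h0 : 0 < n / 3 := Nat.div_pos (Nat.le_of_dvd hn hdvd) (by norm_num)
        have h1 := hAz hA ⟨0, h0⟩
        rw [hZ ⟨0, h0⟩] at h1
        cases h1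
      rcases hBT with ⟨hB, hnT⟩ | ⟨hT, -⟩
      · obtain ⟨hpsi, hW⟩ := hw ⟨hnZ, hnT⟩
        exact Or.inr (Or.inl ⟨hA, hAz hA, hB, hBt hB, hW, hpsi⟩)
      · exact Or.inr (Or.inr (Or.inl ⟨hA, hAz hA, hT,
          fun j => (hTy hT j).1.trans (hTy hT j).2.symm, hTw ⟨hnZ, hT⟩⟩))
    · have hT := hZT hZ
      exact Or.inr (Or.inr (Or.inr ⟨hZ, fun i => (hZx hZ i).1.trans (hZx hZ i).2.symm, hT,
        fun j => (hTy hT j).1.trans (hTy hT j).2.symm, hZTw ⟨hZ, hT⟩⟩))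
  · exact Or.inl hu
end

section
/- In the manipulation construction, the ballots J*_{old,1} and J*_{old,2} are rational, Dist(J*_{old,1}, J⃗) = Dist(J*_{old,2}, J⃗) = 7n + 3m + 1 + 3u, and every rational ballot r satisfies Dist(r, J⃗) ≥ 7n + 3m + 1 + 3u; consequently J*_{old,1} ∈ Kemeny(J⃗) and J*_{old,2} ∈ Kemeny(J⃗). -/
/-!
The cumulative distance to the profile splits issue by issue: an issue on which a ballot is false
costs the number of the three voters accepting it, and one on which it is true costs the number
rejecting it. An `x`-, `x'`-, `w`- or `u`-issue is accepted by exactly one voter, so it costs 1 when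
false and 2 when true; a `z`-, `y`-, `y'`- or `t`-issue is accepted by nobody, so it costs 0 or 3.
Hence the all-false ballot has distance `5n + 1 + 3u`, and a ballot pays on top of that one unit per
true issue of the first kind and three per true issue of the second kind (`DistP_eq`).

A rational ballot pays at least `2n + 3m` extra (`le_DistP_of_rational`). If some block
`u_{i,1}, …, u_{i,u}` is all true, that costs `u ≥ 2n + 3m`. Otherwise it satisfies `Γ₀`:
* with `Z` and `T`, it pays `3(n/3) + 3m`, and `n` for `w₂` or `w₃`;
* with `T` but not `Z`, it pays `n` for `A`, `3m` for `T` and `n + 1` for `w₁`;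
* with neither, it pays `n` for `A`, `3m` for `B`, and `n` for `w₂` or `w₃`.
The two old ballots attain the bound of the first case.
-/

/-!
Constraint-based judgment aggregation: the manipulation construction.
Issues are modelled as an inductive type, ballots as functions `Issue n m → Bool`,
the integrity constraint as a predicate on ballots, and the formula ψ as a Boolean
function of the assignments to X and Y.
-/

namespace Manip

variable {n m : ℕ}

/-- The ballot J*_{old,1}: true exactly on the z-, t- and w₂-issues. -/
def JoldOne : Issue n m → Bool := fun i => match i with
  | .z _ => true
  | .t _ => true
  | .w2 _ => true
  | _ => false

/-- The ballot J*_{old,2}: true exactly on the z-, t- and w₃-issues. -/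
def JoldTwo : Issue n m → Bool := fun i => match i with
  | .z _ => true
  | .t _ => true
  | .w3 _ => true
  | _ => false

end Manip

namespace Manip

/-- The issues as a disjoint union of their ten families. -/
def issueEquiv (n m : ℕ) :
    Issue n m ≃ Fin n ⊕ Fin n ⊕ Fin (n / 3) ⊕ Fin m ⊕ Fin m ⊕ Fin m ⊕ Fin (n + 1) ⊕ Fin n ⊕
      Fin n ⊕ (Fin 3 × Fin (10 * n + 10 * m + 10)) where
  toFun
    | .x i => .inl i
    | .x' i => .inr (.inl i)
    | .z i => .inr (.inr (.inl i))
    | .y i => .inr (.inr (.inr (.inl i)))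
    | .y' i => .inr (.inr (.inr (.inr (.inl i))))
    | .t i => .inr (.inr (.inr (.inr (.inr (.inl i)))))
    | .w1 i => .inr (.inr (.inr (.inr (.inr (.inr (.inl i))))))
    | .w2 i => .inr (.inr (.inr (.inr (.inr (.inr (.inr (.inl i)))))))
    | .w3 i => .inr (.inr (.inr (.inr (.inr (.inr (.inr (.inr (.inl i))))))))
    | .u k i => .inr (.inr (.inr (.inr (.inr (.inr (.inr (.inr (.inr (k, i)))))))))
  invFun
    | .inl i => .x i
    | .inr (.inl i) => .x' i
    | .inr (.inr (.inl i)) => .z i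
    | .inr (.inr (.inr (.inl i))) => .y i
    | .inr (.inr (.inr (.inr (.inl i)))) => .y' i
    | .inr (.inr (.inr (.inr (.inr (.inl i))))) => .t i
    | .inr (.inr (.inr (.inr (.inr (.inr (.inl i)))))) => .w1 i
    | .inr (.inr (.inr (.inr (.inr (.inr (.inr (.inl i))))))) => .w2 i
    | .inr (.inr (.inr (.inr (.inr (.inr (.inr (.inr (.inl i)))))))) => .w3 i
    | .inr (.inr (.inr (.inr (.inr (.inr (.inr (.inr (.inr (k, i))))))))) => .u k i
  left_inv i := by cases i <;> rfl
  right_inv i := by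
    rcases i with i | i | i | i | i | i | i | i | i | ⟨k, i⟩ <;> rfl

lemma sum_issue (f : Issue n m → ℕ) :
    ∑ i, f i = ∑ i, f (.x i) + ∑ i, f (.x' i) + ∑ i, f (.z i) + ∑ j, f (.y j) + ∑ j, f (.y' j) +
      ∑ j, f (.t j) + ∑ l, f (.w1 l) + ∑ l, f (.w2 l) + ∑ l, f (.w3 l) +
      ∑ k, ∑ l, f (.u k l) := by
  rw [← (issueEquiv n m).symm.sum_comp f]
  simp only [Fintype.sum_sum_type, Fintype.sum_prod_type, issueEquiv, Equiv.coe_fn_symm_mk]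
  ring

/-- The number of true values of a Boolean family. -/
def trues {k : ℕ} (f : Fin k → Bool) : ℕ := ∑ i, (f i).toNat

lemma trues_eq_of_true {k : ℕ} {f : Fin k → Bool} (h : ∀ i, f i = true) : trues f = k := by
  simp [trues, h]

lemma trues_add_of_ne {k : ℕ} {f g : Fin k → Bool} (h : ∀ i, f i ≠ g i) :
    trues f + trues g = k := by
  have h1 : ∀ i, (f i).toNat + (g i).toNat = 1 := fun i => by
    have := h i
    revert this
    cases f i <;> cases g i <;> simp
  simp [trues, ← Finset.sum_add_distrib, h1]

/-- The number of the three voters who disagree with the value `v` on the issue `i`. -/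
def cost (i : Issue n m) (v : Bool) : ℕ :=
  (if v ≠ Jone i then 1 else 0) + (if v ≠ Jtwo i then 1 else 0) + (if v ≠ Jthree i then 1 else 0)

lemma DistP_eq_sum_cost (r : Issue n m → Bool) : DistP r = ∑ i, cost i (r i) := by
  simp only [DistP, dist3, hamming, cost, Finset.card_filter, Finset.sum_add_distrib]

lemma cost_u (k : Fin 3) (l : Fin (10 * n + 10 * m + 10)) (v : Bool) :
    cost (.u k l : Issue n m) v = 1 + v.toNat := by
  fin_cases k <;> cases v <;> rfl

/-- The distance to the profile is that of the all-false ballot plus a weighted count of the true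
issues. -/
lemma DistP_eq (r : Issue n m → Bool) :
    DistP r = 5 * n + 1 + 3 * (10 * n + 10 * m + 10) +
      trues (fun i => r (.x i)) + trues (fun i => r (.x' i)) + 3 * trues (fun i => r (.z i)) +
      3 * trues (fun j => r (.y j)) + 3 * trues (fun j => r (.y' j)) +
      3 * trues (fun j => r (.t j)) + trues (fun l => r (.w1 l)) + trues (fun l => r (.w2 l)) +
      trues (fun l => r (.w3 l)) + ∑ k, trues (fun l => r (.u k l)) := by
  have hx : ∀ i v, cost (.x i : Issue n m) v = 1 + v.toNat := fun i v => by cases v <;> rfl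
  have hx' : ∀ i v, cost (.x' i : Issue n m) v = 1 + v.toNat := fun i v => by cases v <;> rfl
  have hz : ∀ i v, cost (.z i : Issue n m) v = 3 * v.toNat := fun i v => by cases v <;> rfl
  have hy : ∀ i v, cost (.y i : Issue n m) v = 3 * v.toNat := fun i v => by cases v <;> rfl
  have hy' : ∀ i v, cost (.y' i : Issue n m) v = 3 * v.toNat := fun i v => by cases v <;> rfl
  have ht : ∀ i v, cost (.t i : Issue n m) v = 3 * v.toNat := fun i v => by cases v <;> rfl
  have hw1 : ∀ i v, cost (.w1 i : Issue n m) v = 1 + v.toNat := fun i v => by cases v <;> rfl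
  have hw2 : ∀ i v, cost (.w2 i : Issue n m) v = 1 + v.toNat := fun i v => by cases v <;> rfl
  have hw3 : ∀ i v, cost (.w3 i : Issue n m) v = 1 + v.toNat := fun i v => by cases v <;> rfl
  rw [DistP_eq_sum_cost, sum_issue]
  simp only [hx, hx', hz, hy, hy', ht, hw1, hw2, hw3, cost_u, Finset.sum_add_distrib,
    ← Finset.mul_sum, Finset.sum_const, Finset.card_univ, Fintype.card_fin, smul_eq_mul, trues]
  ring

lemma le_DistP_of_rational (hdvd : 3 ∣ n) (psi : (Fin n → Bool) → (Fin m → Bool) → Bool)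
    (r : Issue n m → Bool) (hr : rational psi r) :
    7 * n + 3 * m + 1 + 3 * (10 * n + 10 * m + 10) ≤ DistP r := by
  have hdiv : 3 * (n / 3) = n := Nat.mul_div_cancel' hdvd
  rw [DistP_eq]
  rcases hr with ⟨hAZ, -, hBT, -, -, -, hZT, h23, h1, h0⟩ | ⟨k, hk⟩
  · have hW : bigW2 r ∨ bigW3 r →
        n ≤ trues (fun l => r (.w2 l)) + trues (fun l => r (.w3 l)) := by
      rintro (h | h)
      · rw [trues_eq_of_true h]; omega
      · rw [trues_eq_of_true h]; omega
    by_cases hZ : bigZ r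
    · have hT := hZT hZ
      have e1 := trues_eq_of_true hZ
      have e2 := trues_eq_of_true hT
      have e3 := hW (h23 ⟨hZ, hT⟩)
      omega
    · have e1 := trues_add_of_ne (hAZ.resolve_right hZ)
      by_cases hT : bigT r
      · have e2 := trues_eq_of_true hT
        have e3 := trues_eq_of_true (h1 ⟨hZ, hT⟩)
        omega
      · have hB : bigB r := hBT.elim (fun h => h.1) (fun h => absurd h.1 hT)
        have e2 := trues_add_of_ne hB
        have e3 := hW (h0 ⟨hZ, hT⟩).2
        omega
  · have e1 : trues (fun l => r (.u k l)) ≤ ∑ k, trues (fun l => r (.u k l)) :=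
      Finset.single_le_sum (f := fun k => trues (fun l => r (.u k l)))
        (fun _ _ => Nat.zero_le _) (Finset.mem_univ k)
    rw [trues_eq_of_true hk] at e1
    omega

/-- Any ballot true on all `z`, `t` and on all `w₂` or all `w₃`, and false on all `x`, `x'`, `y` and
`y'`, satisfies `Γ₀`. Positivity of `n` and `m` makes `A` and `B` fail there. -/
lemma rational_of_ZT (hn : 0 < n) (hm : 0 < m) (psi : (Fin n → Bool) → (Fin m → Bool) → Bool)
    {r : Issue n m → Bool} (hZ : bigZ r) (hT : bigT r) (hW : bigW2 r ∨ bigW3 r)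
    (hx : ∀ i, r (.x i) = false ∧ r (.x' i) = false)
    (hy : ∀ j, r (.y j) = false ∧ r (.y' j) = false) : rational psi r := by
  have hA : ¬ bigA r := fun h => h ⟨0, hn⟩ ((hx _).1.trans (hx _).2.symm)
  have hB : ¬ bigB r := fun h => h ⟨0, hm⟩ ((hy _).1.trans (hy _).2.symm)
  exact .inl ⟨.inr hZ, fun h => absurd h hA, .inr ⟨hT, hB⟩, fun h => absurd h hB, fun _ => hx,
    fun _ => hy, fun _ => hT, fun _ => hW, fun h => absurd hZ h.1, fun h => absurd hZ h.1⟩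

lemma DistP_JoldOne (hdvd : 3 ∣ n) :
    DistP (JoldOne : Issue n m → Bool) = 7 * n + 3 * m + 1 + 3 * (10 * n + 10 * m + 10) := by
  have hdiv : 3 * (n / 3) = n := Nat.mul_div_cancel' hdvd
  rw [DistP_eq]
  simp only [JoldOne, trues, Bool.toNat_true, Bool.toNat_false, Finset.sum_const,
    Finset.card_univ, Fintype.card_fin, smul_eq_mul]
  omega

lemma DistP_JoldTwo (hdvd : 3 ∣ n) :
    DistP (JoldTwo : Issue n m → Bool) = 7 * n + 3 * m + 1 + 3 * (10 * n + 10 * m + 10) := by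
  have hdiv : 3 * (n / 3) = n := Nat.mul_div_cancel' hdvd
  rw [DistP_eq]
  simp only [JoldTwo, trues, Bool.toNat_true, Bool.toNat_false, Finset.sum_const,
    Finset.card_univ, Fintype.card_fin, smul_eq_mul]
  omega

end Manip

open Manip in
/-- J*_{old,1} and J*_{old,2} are rational, have cumulative distance
7n + 3m + 1 + 3u to the profile J⃗, every rational ballot has distance at least that,
and consequently both are Kemeny outcomes of J⃗. -/
theorem manip_old_winners (n m : ℕ) (hn : 0 < n) (hdvd : 3 ∣ n) (hm : 0 < m)
    (psi : (Fin n → Bool) → (Fin m → Bool) → Bool) :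
    rational psi (JoldOne : Issue n m → Bool) ∧
    rational psi (JoldTwo : Issue n m → Bool) ∧
    DistP (JoldOne : Issue n m → Bool) = 7 * n + 3 * m + 1 + 3 * (10 * n + 10 * m + 10) ∧
    DistP (JoldTwo : Issue n m → Bool) = 7 * n + 3 * m + 1 + 3 * (10 * n + 10 * m + 10) ∧
    (∀ r : Issue n m → Bool, rational psi r →
      7 * n + 3 * m + 1 + 3 * (10 * n + 10 * m + 10) ≤ DistP r) ∧
    kemenyMem psi Jone Jtwo Jthree (JoldOne : Issue n m → Bool) ∧
    kemenyMem psi Jone Jtwo Jthree (JoldTwo : Issue n m → Bool) := by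
  have h1 : rational psi (JoldOne : Issue n m → Bool) :=
    rational_of_ZT hn hm psi (fun _ => rfl) (fun _ => rfl) (.inl fun _ => rfl)
      (fun _ => ⟨rfl, rfl⟩) (fun _ => ⟨rfl, rfl⟩)
  have h2 : rational psi (JoldTwo : Issue n m → Bool) :=
    rational_of_ZT hn hm psi (fun _ => rfl) (fun _ => rfl) (.inr fun _ => rfl)
      (fun _ => ⟨rfl, rfl⟩) (fun _ => ⟨rfl, rfl⟩)
  have d1 := DistP_JoldOne (n := n) (m := m) hdvd
  have d2 := DistP_JoldTwo (n := n) (m := m) hdvd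
  have hle := le_DistP_of_rational hdvd psi
  exact ⟨h1, h2, d1, d2, hle, ⟨h1, fun r hr => d1.le.trans (hle r hr)⟩,
    ⟨h2, fun r hr => d2.le.trans (hle r hr)⟩⟩
end

section
/- In the bribery construction, the ballot J*_{old} is rational and J*_{old} ∈ Kemeny(J⃗); moreover, every Kemeny outcome r* ∈ Kemeny(J⃗) sets every issue b_j (j ∈ [2m+4]) to false, and consequently d(r*, J₀, w) = 2m+4 for every r* ∈ Kemeny(J⃗). -/
/-!
A ballot `r` pays, summed over the three ballots of the profile, `3` for each non-`u` issue it
accepts, `1` for each `u`-issue it rejects and `2` for each `u`-issue it accepts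
(`Brib.dist3_eq`). Writing `u = 10n + 10m + 10`, the total is thus `3u` plus the number of accepted
`u`-issues plus three times the number of accepted non-`u` issues, and `J*_old` pays
`3u + 3(n + m + 1)`.

A rational ballot that accepts some block `u_{i,·}` pays at least `4u`, which is more
(`Brib.dist3_of_block`). A ballot satisfying `Γ₀` accepts at least `n` issues among `x, x', z` (from
`A` or `Z`) and at least `m` among `y, y', t` (from `B` or `T`). If it accepts `a`, it pays at
least as much as `J*_old`, and all `b_j` are rejected. If it rejects `a`, it accepts all `2m + 4`
issues `b_j` and pays strictly more (`Brib.dist3_of_gamma0`). Hence `J*_old` is optimal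
and every optimal ballot rejects all `b_j`.
-/

/-!
Constraint-based judgment aggregation: the bribery construction.
Issues are modelled as an inductive type, ballots as functions `Issue n m → Bool`,
the integrity constraint as a predicate on ballots, and the formula ψ as a Boolean
function of the assignments to X and Y.
-/

namespace Brib

/-- The issues of the bribery construction. -/
inductive Issue (n m : ℕ) : Type
  | x : Fin n → Issue n m
  | x' : Fin n → Issue n m
  | z : Fin n → Issue n m
  | y : Fin m → Issue n m
  | y' : Fin m → Issue n m
  | t : Fin m → Issue n m
  | u : Fin 3 → Fin (10 * n + 10 * m + 10) → Issue n m
  | a : Issue n m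
  | b : Fin (2 * m + 4) → Issue n m
  deriving DecidableEq, Fintype

variable {n m : ℕ}

/-- Hamming distance between two ballots: the number of issues on which they differ. -/
def hamming {I : Type*} [Fintype I] (r r' : I → Bool) : ℕ :=
  (Finset.univ.filter (fun i => r i ≠ r' i)).card

/-- Weighted Hamming distance: the sum of the weights of the issues on which the
two ballots differ. -/
def whamming {I : Type*} [Fintype I] (w : I → ℕ) (r r' : I → Bool) : ℕ :=
  ∑ i ∈ Finset.univ.filter (fun i => r i ≠ r' i), w i

def bigA (r : Issue n m → Bool) : Prop := ∀ i, r (.x i) ≠ r (.x' i)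
def bigZ (r : Issue n m → Bool) : Prop := ∀ i, r (.z i) = true
def bigB (r : Issue n m → Bool) : Prop := ∀ j, r (.y j) ≠ r (.y' j)
def bigT (r : Issue n m → Bool) : Prop := ∀ j, r (.t j) = true
def bigC (r : Issue n m → Bool) : Prop := ∀ j, r (.b j) = true

/-- The part Γ₀ of the integrity constraint. -/
def gamma0 (psi : (Fin n → Bool) → (Fin m → Bool) → Bool) (r : Issue n m → Bool) : Prop :=
  (r .a = true ∨ bigC r) ∧ (r .a = true → ∀ j, r (.b j) = false) ∧
  (bigC r → r .a = false) ∧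
  (bigA r ∨ bigZ r) ∧ (bigA r → ∀ i, r (.z i) = false) ∧
  Xor' (bigB r) (bigT r) ∧ (bigB r → ∀ j, r (.t j) = false) ∧
  (bigZ r → ∀ i, r (.x i) = false ∧ r (.x' i) = false) ∧
  (bigT r → ∀ j, r (.y j) = false ∧ r (.y' j) = false) ∧
  (bigZ r → (r .a = true ∧ bigT r)) ∧
  ((bigA r ∧ bigB r) →
    (psi (fun i => r (.x i)) (fun j => r (.y j)) = false ∧ r .a = true)) ∧
  ((bigA r ∧ bigT r) → bigC r)

/-- A ballot is rational if it satisfies the integrity constraint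
`Γ = Γ₀ ∨ ⋁_{i∈[3]} ⋀_{ℓ∈[u]} u_{i,ℓ}`. -/
def rational (psi : (Fin n → Bool) → (Fin m → Bool) → Bool) (r : Issue n m → Bool) : Prop :=
  gamma0 psi r ∨ ∃ i : Fin 3, ∀ ℓ, r (.u i ℓ) = true

/-- The profile J⃗ = (J₁, J₂, J₃): the ballot J_{k+1} sets exactly the issues
u_{k+1,ℓ} to true. -/
def Jp (k : Fin 3) : Issue n m → Bool := fun i => match i with
  | .u k' _ => k' == k
  | _ => false

/-- The briber's desired ballot J₀: true exactly on the b- and u₁-issues. -/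
def Jzero : Issue n m → Bool := fun i => match i with
  | .b _ => true
  | .u k _ => k == 0
  | _ => false

/-- The briber's weight function: weight 1 on each b-issue, weight 0 elsewhere. -/
def wt : Issue n m → ℕ := fun i => match i with
  | .b _ => 1
  | _ => 0

/-- Cumulative Hamming distance of a ballot to a profile of three ballots. -/
def dist3 (r p1 p2 p3 : Issue n m → Bool) : ℕ :=
  hamming r p1 + hamming r p2 + hamming r p3

/-- Membership in the set of Kemeny outcomes of the profile (p1, p2, p3):
a rational ballot minimizing the cumulative Hamming distance among rational ballots. -/
def kemenyMem (psi : (Fin n → Bool) → (Fin m → Bool) → Bool)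
    (p1 p2 p3 r : Issue n m → Bool) : Prop :=
  rational psi r ∧ ∀ r', rational psi r' → dist3 r p1 p2 p3 ≤ dist3 r' p1 p2 p3

/-- The ballot J*_{old}: true exactly on the z-, t- and a-issues. -/
def Jold : Issue n m → Bool := fun i => match i with
  | .z _ => true
  | .t _ => true
  | .a => true
  | _ => false

end Brib

namespace Brib

variable {n m : ℕ}

/-- The issues as a disjoint sum of their nine families; used to split sums over all issues. -/
def issueEquiv (n m : ℕ) : Issue n m ≃
    Fin n ⊕ Fin n ⊕ Fin n ⊕ Fin m ⊕ Fin m ⊕ Fin m ⊕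
      (Fin 3 × Fin (10 * n + 10 * m + 10)) ⊕ Unit ⊕ Fin (2 * m + 4) where
  toFun
    | .x i => .inl i
    | .x' i => .inr (.inl i)
    | .z i => .inr (.inr (.inl i))
    | .y j => .inr (.inr (.inr (.inl j)))
    | .y' j => .inr (.inr (.inr (.inr (.inl j))))
    | .t j => .inr (.inr (.inr (.inr (.inr (.inl j)))))
    | .u k l => .inr (.inr (.inr (.inr (.inr (.inr (.inl (k, l)))))))
    | .a => .inr (.inr (.inr (.inr (.inr (.inr (.inr (.inl ())))))))
    | .b j => .inr (.inr (.inr (.inr (.inr (.inr (.inr (.inr j)))))))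
  invFun
    | .inl i => .x i
    | .inr (.inl i) => .x' i
    | .inr (.inr (.inl i)) => .z i
    | .inr (.inr (.inr (.inl j))) => .y j
    | .inr (.inr (.inr (.inr (.inl j)))) => .y' j
    | .inr (.inr (.inr (.inr (.inr (.inl j))))) => .t j
    | .inr (.inr (.inr (.inr (.inr (.inr (.inl (k, l))))))) => .u k l
    | .inr (.inr (.inr (.inr (.inr (.inr (.inr (.inl ()))))))) => .a
    | .inr (.inr (.inr (.inr (.inr (.inr (.inr (.inr j))))))) => .b j
  left_inv i := by cases i <;> rfl
  right_inv s := by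
    rcases s with _ | _ | _ | _ | _ | _ | ⟨_, _⟩ | _ | _ <;> rfl

lemma sum_issue (f : Issue n m → ℕ) :
    ∑ i, f i = ∑ i, (f (.x i) + f (.x' i) + f (.z i)) + ∑ j, (f (.y j) + f (.y' j) + f (.t j))
      + ∑ k, ∑ l, f (.u k l) + f .a + ∑ j, f (.b j) := by
  rw [← Equiv.sum_comp (issueEquiv n m).symm f]
  simp only [Fintype.sum_sum_type, Fintype.sum_prod_type, Finset.sum_add_distrib]
  simp [issueEquiv]
  ring

lemma dist3_eq (r : Issue n m → Bool) :
    dist3 r (Jp 0) (Jp 1) (Jp 2) = 3 * (10 * n + 10 * m + 10)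
      + ∑ k, ∑ l, (r (.u k l)).toNat
      + 3 * (∑ i, ((r (.x i)).toNat + (r (.x' i)).toNat + (r (.z i)).toNat)
        + ∑ j, ((r (.y j)).toNat + (r (.y' j)).toNat + (r (.t j)).toNat)
        + (r .a).toNat + ∑ j, (r (.b j)).toNat) := by
  have key : dist3 r (Jp 0) (Jp 1) (Jp 2) = ∑ i : Issue n m,
      ((if r i ≠ Jp 0 i then 1 else 0) + (if r i ≠ Jp 1 i then 1 else 0)
        + (if r i ≠ Jp 2 i then 1 else 0)) := by
    simp only [dist3, hamming, Finset.card_filter, Finset.sum_add_distrib]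
  -- The cost of a single issue.
  have hc : ∀ i : Issue n m, ((if r i ≠ Jp 0 i then 1 else 0) + (if r i ≠ Jp 1 i then 1 else 0)
        + (if r i ≠ Jp 2 i then 1 else 0)) = match i with
      | .u k l => 1 + (r (.u k l)).toNat
      | i => 3 * (r i).toNat := by
    intro i
    rcases hi : r i <;> rcases i with _ | _ | _ | _ | _ | _ | ⟨k, _⟩ | _ | _ <;>
      try simp [Jp, hi]
    all_goals fin_cases k <;> simp
  rw [key, Finset.sum_congr rfl fun i _ => hc i, sum_issue]
  simp only [Finset.sum_add_distrib, ← Finset.mul_sum]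
  simp
  ring

lemma dist3_Jold : dist3 (Jold : Issue n m → Bool) (Jp 0) (Jp 1) (Jp 2)
    = 3 * (10 * n + 10 * m + 10) + 3 * (n + m + 1) := by
  rw [dist3_eq]
  simp [Jold]

lemma dist3_of_block {r : Issue n m → Bool} {k : Fin 3} (h : ∀ l, r (.u k l) = true) :
    4 * (10 * n + 10 * m + 10) ≤ dist3 r (Jp 0) (Jp 1) (Jp 2) := by
  have h1 : ∑ l, (r (.u k l)).toNat ≤ ∑ k, ∑ l, (r (.u k l)).toNat :=
    Finset.single_le_sum (f := fun k => ∑ l, (r (.u k l)).toNat)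
      (fun _ _ => Nat.zero_le _) (Finset.mem_univ k)
  simp only [h, Bool.toNat_true, Finset.sum_const, Finset.card_univ, Fintype.card_fin,
    smul_eq_mul, mul_one] at h1
  rw [dist3_eq]
  omega

/-- If every index of a family contributes an accepted issue, the family contributes at least its
size. -/
lemma le_sum_of_one_le {p : ℕ} {f : Fin p → ℕ} (h : ∀ i, 1 ≤ f i) : p ≤ ∑ i, f i := by
  simpa using Finset.card_nsmul_le_sum Finset.univ f 1 (fun i _ => h i)

/-- A ballot satisfying `Γ₀` either rejects every `b_j` and is at least as costly as `J*_old`, or is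
strictly more costly. -/
lemma dist3_of_gamma0 {psi : (Fin n → Bool) → (Fin m → Bool) → Bool} {r : Issue n m → Bool}
    (h : gamma0 psi r) :
    ((∀ j, r (.b j) = false) ∧
      3 * (10 * n + 10 * m + 10) + 3 * (n + m + 1) ≤ dist3 r (Jp 0) (Jp 1) (Jp 2)) ∨
    3 * (10 * n + 10 * m + 10) + 3 * (n + m + 1) < dist3 r (Jp 0) (Jp 1) (Jp 2) := by
  obtain ⟨haC, hab, -, hAZ, -, hBT, -⟩ := h
  have hxor : ∀ c d : Bool, c ≠ d → 1 ≤ c.toNat + d.toNat := by decide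
  have hX : n ≤ ∑ i, ((r (.x i)).toNat + (r (.x' i)).toNat + (r (.z i)).toNat) := by
    refine le_sum_of_one_le fun i => ?_
    rcases hAZ with hA | hZ
    · have := hxor _ _ (hA i)
      omega
    · simp [hZ i]
  have hY : m ≤ ∑ j, ((r (.y j)).toNat + (r (.y' j)).toNat + (r (.t j)).toNat) := by
    refine le_sum_of_one_le fun j => ?_
    rcases hBT.imp And.left And.left with hB | hT
    · have := hxor _ _ (hB j)
      omega
    · simp [hT j]
  rw [dist3_eq]
  rcases haC with ha | hC
  · refine Or.inl ⟨hab ha, ?_⟩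
    simp only [ha, Bool.toNat_true]
    omega
  · have hb : 2 * m + 4 ≤ ∑ j, (r (.b j)).toNat := le_sum_of_one_le fun j => by simp [hC j]
    right
    omega

lemma rational_Jold (hn : 0 < n) (hm : 0 < m) (psi : (Fin n → Bool) → (Fin m → Bool) → Bool) :
    rational psi (Jold : Issue n m → Bool) := by
  -- `A` and `B` fail only because `n` and `m` are positive.
  have hA : ¬ bigA (Jold : Issue n m → Bool) := fun h => h ⟨0, hn⟩ rfl
  have hB : ¬ bigB (Jold : Issue n m → Bool) := fun h => h ⟨0, hm⟩ rfl
  have hC : ¬ bigC (Jold : Issue n m → Bool) := fun h => by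
    simpa [Jold] using h ⟨0, by omega⟩
  have hZ : bigZ (Jold : Issue n m → Bool) := fun _ => rfl
  have hT : bigT (Jold : Issue n m → Bool) := fun _ => rfl
  left
  simp only [gamma0, hA, hB, hC, hZ, hT]
  simp [Jold]
  exact Or.inr ⟨trivial, id⟩

lemma rational_cost {psi : (Fin n → Bool) → (Fin m → Bool) → Bool} {r : Issue n m → Bool}
    (h : rational psi r) :
    ((∀ j, r (.b j) = false) ∧
      3 * (10 * n + 10 * m + 10) + 3 * (n + m + 1) ≤ dist3 r (Jp 0) (Jp 1) (Jp 2)) ∨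
    3 * (10 * n + 10 * m + 10) + 3 * (n + m + 1) < dist3 r (Jp 0) (Jp 1) (Jp 2) := by
  rcases h with h | ⟨k, hk⟩
  · exact dist3_of_gamma0 h
  · have := dist3_of_block hk
    right
    omega

lemma whamming_Jzero {r : Issue n m → Bool} (h : ∀ j, r (.b j) = false) :
    whamming wt r Jzero = 2 * m + 4 := by
  rw [whamming, Finset.sum_filter, sum_issue]
  simp only [wt, ite_self, Finset.sum_const_zero]
  simp [Jzero, h]

end Brib

open Brib in
/-- J*_{old} is rational and a Kemeny outcome of J⃗; moreover every
Kemeny outcome of J⃗ sets every b-issue to false, and consequently has weighted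
Hamming distance 2m+4 to J₀. -/
theorem brib_old_winner (n m : ℕ) (hn : 0 < n) (hm : 0 < m)
    (psi : (Fin n → Bool) → (Fin m → Bool) → Bool) :
    rational psi (Jold : Issue n m → Bool) ∧
    kemenyMem psi (Jp 0) (Jp 1) (Jp 2) (Jold : Issue n m → Bool) ∧
    (∀ r : Issue n m → Bool, kemenyMem psi (Jp 0) (Jp 1) (Jp 2) r →
      ∀ j, r (.b j) = false) ∧
    (∀ r : Issue n m → Bool, kemenyMem psi (Jp 0) (Jp 1) (Jp 2) r →
      whamming wt r Jzero = 2 * m + 4) := by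
  have hold := rational_Jold hn hm psi
  have hb : ∀ r : Issue n m → Bool, kemenyMem psi (Jp 0) (Jp 1) (Jp 2) r →
      ∀ j, r (.b j) = false := by
    rintro r ⟨hr, hmin⟩
    have hle := hmin _ hold
    rw [dist3_Jold] at hle
    rcases rational_cost hr with ⟨h, -⟩ | h
    · exact h
    · omega
  refine ⟨hold, ⟨hold, fun r' hr' => ?_⟩, hb, fun r hr => whamming_Jzero (hb r hr)⟩
  rw [dist3_Jold]
  rcases rational_cost hr' with ⟨-, h⟩ | h <;> omega
end
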